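/- arXiv:2303.00892 — 9 statements merged into one kernel-verified Lean document; each statement's English description precedes it below -/
import Mathlib

section
/- A choice rule C on a finite set 𝒳 of contracts satisfies path independence if and only if there exists a utility function u : 2^𝒳 → ℝ that rationalizes C and satisfies ordinal concavity. -/
/-!
If `C X` is the unique maximizer of an ordinally concave `u` on the subsets of `X`, then applying
ordinal concavity to `C X'` and `C X` with `X ⊆ X'` shows that a contract of `X` chosen from `X'`
is chosen from `X`; together with irrelevance of rejected contracts (immediate for unique
maximizers) this is path independence.

Conversely, a path independent `C` is a union of maximizers of rankings, in the manner of
Aizerman and Malishevski. A ranking is a function `r : α → ℕ`, injective where it is positive, with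
`0` meaning unacceptable; it is compatible with `C` if the top acceptable element of every `Y`
belongs to `C Y`. For each `x ∈ C X` there is a compatible ranking whose top element in `X` is `x`
(`exists_ranking`), so finitely many compatible rankings `r i` determine `C`. Compare sets
lexicographically by the values `X.sup (r i)` of their top elements, and finally by smaller
cardinality. Then `C X` is the unique best subset of `X`, because it keeps every top element and
nothing else (`lexValue_lt_choice`).

For ordinal concavity at `x ∈ X \ X'` (`lexValue_exchange`), either dropping `x` changes no top
value of `X`, and `X - x` is better than `X`; or, for the first `i` whose top value changes, either
`x` raises the `i`-th top value of `X'`, and `X' + x` is better than `X'`, or the `i`-th top element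
`a` of `X'` beats `x`, and `X - x + a` is better than `X`. The lexicographic order embeds in `ℝ`
because there are only finitely many sets.
-/

open Finset

variable {α : Type*} [DecidableEq α] [Fintype α]

/-- `X − x + x'`, where `x'` may be `∅` (encoded as `none`). -/
def swapIn (X : Finset α) (x : α) (x' : Option α) : Finset α :=
  x'.elim (X.erase x) (fun a => insert a (X.erase x))

/-- `X' + x − x'`, where `x'` may be `∅` (encoded as `none`). -/
def swapOut (X' : Finset α) (x : α) (x' : Option α) : Finset α :=
  x'.elim (insert x X') (fun a => (insert x X').erase a)

/-- A choice rule selects a subset of every available set. -/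
def IsChoiceRule (C : Finset α → Finset α) : Prop :=
  ∀ X : Finset α, C X ⊆ X

def PathIndependent (C : Finset α → Finset α) : Prop :=
  ∀ X X' : Finset α, C (X ∪ X') = C (C X ∪ X')

def LawOfAggregateDemand (C : Finset α → Finset α) : Prop :=
  ∀ X X' : Finset α, X' ⊆ X → (C X').card ≤ (C X).card

def Rationalizes (u : Finset α → ℝ) (C : Finset α → Finset α) : Prop :=
  ∀ X X' : Finset α, X' ⊆ X → X' ≠ C X → u X' < u (C X)

def OrdinalConcave (u : Finset α → ℝ) : Prop :=
  ∀ X X' : Finset α, ∀ x ∈ X \ X', ∃ x' : Option α,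
    (∀ a : α, x' = some a → a ∈ X' \ X) ∧
    (u X < u (swapIn X x x') ∨ u X' < u (swapOut X' x x') ∨
      (u X = u (swapIn X x x') ∧ u X' = u (swapOut X' x x')))

def OrdinalConcavePlus (u : Finset α → ℝ) : Prop :=
  ∀ X X' : Finset α, ∀ x ∈ X \ X',
    (∃ x' : Option α, (∀ a : α, x' = some a → a ∈ X' \ X) ∧ u X < u (swapIn X x x')) ∨
    u X' < u (insert x X')

def SizeRestrictedConcave (u : Finset α → ℝ) : Prop :=
  ∀ X X' : Finset α, X'.card < X.card → ∃ x ∈ X \ X',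
    (u X < u (X.erase x) ∨ u X' < u (insert x X') ∨
      (u X = u (X.erase x) ∧ u X' = u (insert x X')))

def MNatConcave (u : Finset α → ℝ) : Prop :=
  ∀ X X' : Finset α, ∀ x ∈ X \ X', ∃ x' : Option α,
    (∀ a : α, x' = some a → a ∈ X' \ X) ∧
    u X + u X' ≤ u (swapIn X x x') + u (swapOut X' x x')

def Substitutes (C : Finset α → Finset α) : Prop :=
  ∀ X X' : Finset α, X ⊆ X' → C X' ∩ X ⊆ C X

def IrrelevanceOfRejectedContracts (C : Finset α → Finset α) : Prop :=
  ∀ X X' : Finset α, X ⊆ X' → C X' ⊆ X → C X = C X'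

set_option linter.unusedSectionVars false

/-- `r` ranks contracts strictly, apart from the unacceptable ones, which have value `0`. -/
def IsRanking (r : α → ℕ) : Prop :=
  ∀ y z, 0 < r y → r y = r z → y = z

/-- `y` is the top element of `Y` under `r`: acceptable and strictly above the rest of `Y`. -/
def IsTopOf (r : α → ℕ) (Y : Finset α) (y : α) : Prop :=
  y ∈ Y ∧ 0 < r y ∧ ∀ z ∈ Y, z ≠ y → r z < r y

/-- The value of `X` under the rankings `r 0, r 1, …`: top values in lexicographic order, ties
being broken in favour of smaller sets. -/
def lexValue {n : ℕ} (r : Fin n → α → ℕ) (X : Finset α) : (Lex (Fin n → ℕ)) ×ₗ ℕᵒᵈ :=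
  toLex (toLex fun i => X.sup (r i), OrderDual.toDual X.card)

lemma substitutes_of_pathIndependent {C : Finset α → Finset α} (hC : IsChoiceRule C)
    (h : PathIndependent C) : Substitutes C := by
  intro X X' hX x hx
  rw [mem_inter] at hx
  have h1 : C X' = C (C X ∪ (X' \ X)) := by
    rw [← h, union_sdiff_of_subset hX]
  have h2 := hC _ (h1 ▸ hx.1)
  simp only [mem_union, mem_sdiff] at h2
  tauto

lemma irc_of_pathIndependent {C : Finset α → Finset α}
    (h : PathIndependent C) : IrrelevanceOfRejectedContracts C := by
  intro X X' hX hCX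
  have h1 := h X' X
  rw [union_eq_left.2 hX, union_eq_right.2 hCX] at h1
  exact h1.symm

lemma pathIndependent_of_substitutes_irc {C : Finset α → Finset α} (hC : IsChoiceRule C)
    (hs : Substitutes C) (hi : IrrelevanceOfRejectedContracts C) : PathIndependent C := by
  intro X X'
  refine (hi _ _ (union_subset_union_left (hC X)) ?_).symm
  intro x hx
  rcases mem_union.1 (hC _ hx) with h | h
  · exact mem_union_left _ (hs X _ subset_union_left (mem_inter.2 ⟨hx, h⟩))
  · exact mem_union_right _ h

lemma irc_of_rationalizes {C : Finset α → Finset α} (hC : IsChoiceRule C)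
    {u : Finset α → ℝ} (hu : Rationalizes u C) : IrrelevanceOfRejectedContracts C := by
  intro X X' hX hCX
  by_contra hne
  have h1 := hu X' (C X) ((hC X).trans hX) hne
  have h2 := hu X (C X') hCX (Ne.symm hne)
  exact lt_asymm h1 h2

lemma substitutes_of_rationalizes {C : Finset α → Finset α} (hC : IsChoiceRule C)
    {u : Finset α → ℝ} (hu : Rationalizes u C) (hoc : OrdinalConcave u) : Substitutes C := by
  intro X X' hX x hx
  rw [mem_inter] at hx
  by_contra hxC
  obtain ⟨x', hx', h⟩ := hoc (C X') (C X) x (mem_sdiff.2 ⟨hx.1, hxC⟩)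
  have hin : swapIn (C X') x x' ⊆ X' := by
    rcases x' with _ | a
    · exact (erase_subset _ _).trans (hC X')
    · have ha := (mem_sdiff.1 (hx' a rfl)).1
      exact insert_subset (hX (hC X ha)) ((erase_subset _ _).trans (hC X'))
  have hout : swapOut (C X) x x' ⊆ X := by
    rcases x' with _ | a
    · exact insert_subset hx.2 (hC X)
    · exact (erase_subset _ _).trans (insert_subset hx.2 (hC X))
  -- Neither exchange leaves its choice set fixed, since `x` moves.
  have hne : swapIn (C X') x x' ≠ C X' := by
    intro he
    rw [← he] at hx
    rcases x' with _ | a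
    · simp [swapIn] at hx
    · have ha := (mem_sdiff.1 (hx' a rfl)).1
      simp only [swapIn, Option.elim, mem_insert, mem_erase] at hx
      rcases hx.1 with h | h
      · exact hxC (h ▸ ha)
      · exact h.1 rfl
  have hne' : swapOut (C X) x x' ≠ C X := by
    intro he
    rw [← he] at hxC
    rcases x' with _ | a
    · simp [swapOut] at hxC
    · have ha := (mem_sdiff.1 (hx' a rfl)).2
      simp only [swapOut, Option.elim, mem_insert, mem_erase] at hxC
      exact hxC ⟨fun h => ha (h ▸ hx.1), by simp⟩
  have h1 := hu X' _ hin hne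
  have h2 := hu X _ hout hne'
  rcases h with h | h | h
  · exact lt_asymm h h1
  · exact lt_asymm h h2
  · linarith [h.1]

/-- Peel off contracts one at a time, each chosen from what remains: as long as something outside
`X` is chosen from the remaining set `S`, rank it first. Once `C S ⊆ X`, one has `C S = C X`, and
`x` can be ranked next, with everything else unacceptable. -/
lemma exists_ranking {C : Finset α → Finset α} (hC : IsChoiceRule C) (hs : Substitutes C)
    (hi : IrrelevanceOfRejectedContracts C) {X : Finset α} {x : α} (hx : x ∈ C X)
    (S : Finset α) (hXS : X ⊆ S) :
    ∃ r : α → ℕ, IsRanking r ∧ (∀ Y ⊆ S, ∀ y, IsTopOf r Y y → y ∈ C Y) ∧ IsTopOf r X x := by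
  induction S using Finset.strongInduction with
  | H S ih =>
  by_cases hCS : C S ⊆ X
  · refine ⟨fun z => if z = x then 1 else 0, ?_, ?_, hC X hx, by simp, ?_⟩
    · intro y z hy hyz
      grind
    · intro Y hY y hy
      have hyx : y = x := by
        have := hy.2.1
        grind
      subst hyx
      rw [hi X S hXS hCS] at hx
      exact hs Y S hY (mem_inter.2 ⟨hx, hy.1⟩)
    · intro z _ hz
      simp [hz]
  · obtain ⟨a, haS, haX⟩ := not_subset.1 hCS
    obtain ⟨r, hr, hcomp, htop⟩ := ih (S.erase a) (erase_ssubset (hC S haS))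
      (fun z hz => mem_erase.2 ⟨fun h => haX (h ▸ hz), hXS hz⟩)
    have hb : ∀ z, r z ≤ univ.sup r := fun z => le_sup (mem_univ z)
    refine ⟨fun z => if z = a then univ.sup r + 1 else r z, ?_, ?_, htop.1, ?_, ?_⟩
    · intro y z hy hyz
      have h1 := hb y
      have h2 := hb z
      have h3 := hr y z
      grind
    · rintro Y hY y ⟨hyY, hy0, hyt⟩
      by_cases hya : y = a
      · subst hya
        exact hs Y S hY (mem_inter.2 ⟨haS, hyY⟩)
      · have haY : a ∉ Y := by
          intro haY
          have h1 := hyt a haY (Ne.symm hya)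
          have h2 := hb y
          simp only [if_true, hya, if_false] at h1
          omega
        refine hcomp Y (fun z hz => mem_erase.2 ⟨fun h => haY (h ▸ hz), hY hz⟩) y ⟨hyY, ?_, ?_⟩
        · simpa [hya] using hy0
        · intro z hz hzy
          have hza : z ≠ a := fun h => haY (h ▸ hz)
          simpa [hya, hza] using hyt z hz hzy
    · have hxa : x ≠ a := fun h => haX (h ▸ htop.1)
      simpa [hxa] using htop.2.1
    · intro z hz hzx
      have hxa : x ≠ a := fun h => haX (h ▸ htop.1)
      have hza : z ≠ a := fun h => haX (h ▸ hz)
      simpa [hxa, hza] using htop.2.2 z hz hzx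

lemma exists_isTopOf {r : α → ℕ} (hr : IsRanking r) {X : Finset α} (h : 0 < X.sup r) :
    ∃ y, IsTopOf r X y ∧ X.sup r = r y := by
  have hne : X.Nonempty := by
    rw [nonempty_iff_ne_empty]
    rintro rfl
    simp at h
  obtain ⟨y, hy, hye⟩ := exists_mem_eq_sup X hne r
  refine ⟨y, ⟨hy, hye ▸ h, fun z hz hzy => ?_⟩, hye⟩
  refine lt_of_le_of_ne (hye ▸ le_sup hz) fun he => hzy ?_
  exact (hr y z (hye ▸ h) he.symm).symm

lemma toLex_lt_of_le_of_lt {n : ℕ} {a b : Fin n → ℕ} (i : Fin n) (hle : ∀ j < i, a j ≤ b j)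
    (hlt : a i < b i) : toLex a < toLex b := by
  -- The first coordinate at which `a` is strictly smaller witnesses the lexicographic order.
  obtain ⟨j, hj, hmin⟩ := exists_minimal (s := univ.filter fun j => a j < b j) ⟨i, by simpa⟩
  simp only [mem_filter, mem_univ, true_and] at hj hmin
  have hji : j ≤ i := by
    by_contra hji
    exact hji (hmin hlt (le_of_not_ge hji))
  refine ⟨j, fun k hk => ?_, hj⟩
  refine le_antisymm (hle k (hk.trans_le hji)) ?_
  by_contra hkb
  exact absurd (hmin (not_le.1 hkb) hk.le) (not_le.2 hk)

lemma lexValue_lt_of_sup_lt {n : ℕ} {r : Fin n → α → ℕ} {X Y : Finset α} (i : Fin n)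
    (hle : ∀ j < i, X.sup (r j) ≤ Y.sup (r j)) (hlt : X.sup (r i) < Y.sup (r i)) :
    lexValue r X < lexValue r Y :=
  Prod.Lex.toLex_lt_toLex.2 (Or.inl (toLex_lt_of_le_of_lt i hle hlt))

lemma lexValue_lt_of_card_lt {n : ℕ} {r : Fin n → α → ℕ} {X Y : Finset α}
    (heq : ∀ i, X.sup (r i) = Y.sup (r i)) (hlt : Y.card < X.card) :
    lexValue r X < lexValue r Y :=
  Prod.Lex.toLex_lt_toLex.2 (Or.inr ⟨congrArg toLex (funext heq), OrderDual.toDual_lt_toDual.2 hlt⟩)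

lemma lexValue_exchange {n : ℕ} {r : Fin n → α → ℕ} (hr : ∀ i, IsRanking (r i))
    {X X' : Finset α} {x : α} (hx : x ∈ X) (hx' : x ∉ X') :
    lexValue r X < lexValue r (X.erase x) ∨ lexValue r X' < lexValue r (insert x X') ∨
      ∃ a ∈ X' \ X, lexValue r X < lexValue r (insert a (X.erase x)) := by
  by_cases hall : ∀ i, X.sup (r i) = (X.erase x).sup (r i)
  · exact Or.inl (lexValue_lt_of_card_lt hall (card_erase_lt_of_mem hx))
  right
  push Not at hall
  obtain ⟨i₀, hi₀⟩ := hall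
  -- `i` is the first ranking under which the top value of `X` is attained at `x` only.
  obtain ⟨i, hi, hmin⟩ := exists_minimal
    (s := univ.filter fun i => X.sup (r i) ≠ (X.erase x).sup (r i)) ⟨i₀, by simpa⟩
  simp only [mem_filter, mem_univ, true_and] at hi hmin
  have hbefore : ∀ j < i, X.sup (r j) = (X.erase x).sup (r j) := by
    intro j hj
    by_contra hne
    exact absurd (hmin hne hj.le) (not_le.2 hj)
  have hsup : X.sup (r i) = max (r i x) ((X.erase x).sup (r i)) := by
    conv_lhs => rw [← insert_erase hx]
    rw [sup_insert]
  have hlt : (X.erase x).sup (r i) < r i x := by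
    by_contra h
    exact hi (by rw [hsup, max_eq_right (not_lt.1 h)])
  rw [max_eq_left hlt.le] at hsup
  by_cases hX' : X'.sup (r i) < r i x
  · left
    refine lexValue_lt_of_sup_lt i (fun j _ => sup_mono (subset_insert _ _)) ?_
    exact hX'.trans_le (le_sup (f := r i) (mem_insert_self x X'))
  · right
    obtain ⟨a, ha, hae⟩ := exists_isTopOf (hr i) (X := X') (by omega)
    have hxa : r i x < r i a := by
      refine lt_of_le_of_ne (by omega) fun he => hx' ?_
      rw [hr i x a (by omega) he]
      exact ha.1
    refine ⟨a, mem_sdiff.2 ⟨ha.1, fun haX => ?_⟩, lexValue_lt_of_sup_lt i ?_ ?_⟩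
    · have := le_sup (f := r i) haX
      omega
    · intro j hj
      rw [hbefore j hj]
      exact sup_mono (subset_insert _ _)
    · rw [hsup]
      exact hxa.trans_le (le_sup (f := r i) (mem_insert_self a _))

lemma lexValue_lt_choice {C : Finset α → Finset α} (hC : IsChoiceRule C) {n : ℕ}
    {r : Fin n → α → ℕ} (hr : ∀ i, IsRanking (r i)) (hcomp : ∀ i Y y, IsTopOf (r i) Y y → y ∈ C Y)
    (hrep : ∀ X, ∀ x ∈ C X, ∃ i, IsTopOf (r i) X x) {X X' : Finset α} (hX : X' ⊆ X)
    (hne : X' ≠ C X) : lexValue r X' < lexValue r (C X) := by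
  have hsup : ∀ i, (C X).sup (r i) = X.sup (r i) := by
    intro i
    refine le_antisymm (sup_mono (hC X)) ?_
    rcases Nat.eq_zero_or_pos (X.sup (r i)) with h | h
    · omega
    · obtain ⟨y, hy, hye⟩ := exists_isTopOf (hr i) h
      rw [hye]
      exact le_sup (f := r i) (hcomp i X y hy)
  have hle : ∀ i, X'.sup (r i) ≤ (C X).sup (r i) := fun i => (hsup i).symm ▸ sup_mono hX
  by_cases hlt : ∃ i, X'.sup (r i) < (C X).sup (r i)
  · obtain ⟨i, hi⟩ := hlt
    exact lexValue_lt_of_sup_lt i (fun j _ => hle j) hi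
  push Not at hlt
  have heq : ∀ i, X'.sup (r i) = (C X).sup (r i) := fun i => le_antisymm (hle i) (hlt i)
  refine lexValue_lt_of_card_lt heq (card_lt_card (ssubset_of_subset_of_ne ?_ (Ne.symm hne)))
  intro x hx
  obtain ⟨i, hi⟩ := hrep X x hx
  have hx1 : r i x ≤ X'.sup (r i) := (heq i).symm ▸ le_sup (f := r i) hx
  obtain ⟨y, hy, hye⟩ := exists_isTopOf (hr i) (hi.2.1.trans_le hx1)
  by_contra hxX'
  have hyx : y ≠ x := fun h => hxX' (h ▸ hy.1)
  have := hi.2.2 y (hX hy.1) hyx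
  omega

/-- A function from a finite type to a linear order is ordinally equivalent to a real one: count
the elements of strictly smaller value. -/
lemma exists_real_of_linearOrder {β L : Type*} [Fintype β] [LinearOrder L] (f : β → L) :
    ∃ u : β → ℝ, ∀ X Y, f X < f Y → u X < u Y := by
  refine ⟨fun X => ((univ.filter fun Z => f Z < f X).card : ℝ), fun X Y h => ?_⟩
  refine Nat.cast_lt.2 (card_lt_card ?_)
  rw [ssubset_iff_of_subset]
  · exact ⟨X, by simpa using h, by simp⟩
  · intro Z hZ
    simp only [mem_filter, mem_univ, true_and] at hZ ⊢
    exact hZ.trans h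

/-- Finitely many compatible rankings determine `C`: one for each pair of a set `X` and a contract
chosen from `X`. -/
lemma exists_rankings {C : Finset α → Finset α} (hC : IsChoiceRule C) (h : PathIndependent C) :
    ∃ (n : ℕ) (r : Fin n → α → ℕ), (∀ i, IsRanking (r i)) ∧
      (∀ i Y y, IsTopOf (r i) Y y → y ∈ C Y) ∧ ∀ X, ∀ x ∈ C X, ∃ i, IsTopOf (r i) X x := by
  have hex : ∀ p : {p : Finset α × α // p.2 ∈ C p.1}, ∃ r : α → ℕ, IsRanking r ∧
      (∀ Y ⊆ univ, ∀ y, IsTopOf r Y y → y ∈ C Y) ∧ IsTopOf r p.1.1 p.1.2 := fun p =>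
    exists_ranking hC (substitutes_of_pathIndependent hC h) (irc_of_pathIndependent h) p.2 univ
      (subset_univ _)
  choose r hr hcomp htop using hex
  let e := Fintype.equivFin {p : Finset α × α // p.2 ∈ C p.1}
  refine ⟨_, fun i => r (e.symm i), fun i => hr _, fun i Y => hcomp _ Y (subset_univ _), ?_⟩
  intro X x hx
  refine ⟨e ⟨(X, x), hx⟩, ?_⟩
  simpa using htop ⟨(X, x), hx⟩

theorem stmt0 (C : Finset α → Finset α) (hC : IsChoiceRule C) :
    PathIndependent C ↔
      ∃ u : Finset α → ℝ, Rationalizes u C ∧ OrdinalConcave u := by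
  constructor
  · intro h
    obtain ⟨n, r, hr, hcomp, hrep⟩ := exists_rankings hC h
    obtain ⟨u, hu⟩ := exists_real_of_linearOrder (lexValue r)
    refine ⟨u, fun X X' hX hne => hu _ _ (lexValue_lt_choice hC hr hcomp hrep hX hne), ?_⟩
    intro X X' x hx
    rw [mem_sdiff] at hx
    rcases lexValue_exchange hr hx.1 hx.2 with h1 | h1 | ⟨a, ha, h1⟩
    · exact ⟨none, by simp, Or.inl (hu _ _ h1)⟩
    · exact ⟨none, by simp, Or.inr (Or.inl (hu _ _ h1))⟩
    · refine ⟨some a, ?_, Or.inl (hu _ _ h1)⟩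
      rintro b hb
      rwa [← Option.some_inj.1 hb]
  · rintro ⟨u, hu, hoc⟩
    exact pathIndependent_of_substitutes_irc hC (substitutes_of_rationalizes hC hu hoc)
      (irc_of_rationalizes hC hu)
end

section
/- If a choice rule C on a finite set 𝒳 of contracts is rationalizable by a utility function u satisfying ordinal concavity, then C satisfies path independence. -/
/-!
Path independence follows from two properties of `C`: substitutability (a contract chosen from a
large set is still chosen from any smaller set containing it) and irrelevance of rejected
contracts. The latter only uses that `C` maximizes `u` uniquely. For the former, if `x` were chosen
from `X'` but not from `X ⊆ X'`, ordinal concavity would exchange `x` between `C X'` and `C X`,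
giving a subset of `X'` other than `C X'`, hence strictly worse than it, and a subset of `X`, hence
no better than `C X`; this rules out all three alternatives of ordinal concavity.
-/

open Finset

variable {α : Type*} [DecidableEq α] [Fintype α]

theorem substitutes_of_ordinalConcave (C : Finset α → Finset α) (hC : IsChoiceRule C)
    (u : Finset α → ℝ) (hu : Rationalizes u C) (hoc : OrdinalConcave u) :
    Substitutes C := by
  intro X X' hX x hx
  rw [mem_inter] at hx
  by_contra hn
  obtain ⟨x', hx', h⟩ := hoc (C X') (C X) x (mem_sdiff.2 ⟨hx.1, hn⟩)
  have hx'C : ∀ a, x' = some a → a ∈ C X ∧ a ∉ C X' := fun a ha => mem_sdiff.1 (hx' a ha)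
  have hCX := hC X
  have hCX' := hC X'
  have hlt : u (swapIn (C X') x x') < u (C X') := by
    apply hu
    · cases x' <;> simp only [swapIn, Option.elim] <;> grind
    · -- `x` has left the set, and the contract replacing it is not in `C X'`, so it is not `x`.
      intro heq
      have hmem : x ∈ swapIn (C X') x x' := by rw [heq]; exact hx.1
      cases x' <;> simp only [swapIn, Option.elim] at hmem <;> grind
  have hle : u (swapOut (C X) x x') ≤ u (C X) := by
    by_cases heq : swapOut (C X) x x' = C X
    · rw [heq]
    · refine (hu X _ ?_ heq).le
      cases x' <;> simp only [swapOut, Option.elim] <;> grind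
  rcases h with h | h | ⟨h, -⟩ <;> linarith

theorem irrelevance_of_rationalizes (C : Finset α → Finset α) (hC : IsChoiceRule C)
    (u : Finset α → ℝ) (hu : Rationalizes u C) :
    IrrelevanceOfRejectedContracts C := by
  intro X X' hX hCX
  by_contra hne
  exact lt_asymm (hu X (C X') hCX (Ne.symm hne)) (hu X' (C X) ((hC X).trans hX) hne)

theorem stmt1 (C : Finset α → Finset α) (hC : IsChoiceRule C)
    (u : Finset α → ℝ) (hu : Rationalizes u C) (hoc : OrdinalConcave u) :
    PathIndependent C := by
  intro X X'
  have hsub : C (X ∪ X') ⊆ C X ∪ X' := by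
    intro x hx
    have hS := substitutes_of_ordinalConcave C hC u hu hoc X (X ∪ X') subset_union_left
    rcases mem_union.1 (hC _ hx) with h | h
    · exact mem_union_left _ (hS (mem_inter.2 ⟨hx, h⟩))
    · exact mem_union_right _ h
  exact (irrelevance_of_rationalizes C hC u hu _ _
    (union_subset_union_left (hC X)) hsub).symm
end

section
/- If a choice rule C on a finite set 𝒳 of contracts is rationalizable by a utility function u satisfying size-restricted concavity, then C satisfies the law of aggregate demand. -/
/-!
If the law of aggregate demand failed for some subset `Y` of `X`, size-restricted concavity applied
to the larger set `C Y` and the smaller set `C X` would give a contract `x` in `C Y` but not in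
`C X` such that deleting it from `C Y` or adding it to `C X` does not lower utility. Both modified
sets are feasible (in `Y` and `X` respectively) and differ from the chosen ones, so
rationalization makes both strictly worse, a contradiction.
-/

open Finset

variable {α : Type*} [DecidableEq α] [Fintype α]

theorem stmt4 (C : Finset α → Finset α) (hC : IsChoiceRule C)
    (u : Finset α → ℝ) (hu : Rationalizes u C) (hsrc : SizeRestrictedConcave u) :
    LawOfAggregateDemand C := by
  intro X X' hX
  by_contra! hlt
  obtain ⟨x, hx, h⟩ := hsrc (C X') (C X) hlt
  obtain ⟨hx1, hx2⟩ := mem_sdiff.mp hx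
  -- Removing `x` from `C X'` is feasible in `X'`, hence strictly worse.
  have h1 : u ((C X').erase x) < u (C X') :=
    hu X' _ ((erase_subset _ _).trans (hC X'))
      fun e => notMem_erase x (C X') (by rw [e]; exact hx1)
  -- Adding `x ∈ X' ⊆ X` to `C X` is feasible in `X`, hence strictly worse.
  have h2 : u (insert x (C X)) < u (C X) :=
    hu X _ (insert_subset (hX (hC X' hx1)) (hC X))
      fun e => hx2 (by rw [← e]; exact mem_insert_self _ _)
  rcases h with h | h | ⟨h, -⟩ <;> linarith
end

section
/- If a choice rule C on a finite set 𝒳 of contracts satisfies path independence and the law of aggregate demand, then there exists a utility function u : 2^𝒳 → ℝ that rationalizes C and satisfies both ordinal concavity and size-restricted concavity. -/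
/-!
Call `v : α → ℕ` *compatible* with `C` if it is injective on its positive values and
`v y ≤ max_{Y} v` whenever `y` is rejected from `Y ∪ {y}`. A greedy construction (repeatedly giving
the highest rank to a chosen element and deleting it) shows that whenever `x ∉ X` is chosen from
`X ∪ {x}`, some compatible `v` has `v x > max_X v` (`exists_compatible_separating`); this is a form
of the Aizerman–Malishevski decomposition of path independent choice.

Let `v₁, …, vₙ` be compatible functions separating all such pairs, and let `u` represent the
lexicographic order on `(max_X v₁, …, max_X vₙ, -|X|)`. Then `x ∉ X` chosen from `X ∪ {x}` gives
`u X < u (X ∪ {x})`, and `x ∈ X` rejected from `X` gives `u X < u (X \ {x})`; this yields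
rationalization.

*Ordinal concavity.* By the above, the only remaining case is that `x ∈ C X` and `x` is rejected
from `X' ∪ {x}`. Let `i` be the first index with `vᵢ x > max_{X \ {x}} vᵢ`. By compatibility some
`x' ∈ X'` has `vᵢ x' > vᵢ x`. Replacing `x` by `x'` in `X` lowers no maximum before `i` and raises
the `i`-th one.

*Size-restricted concavity.* If it failed at `X, X'`, then every element of `X \ X'` would be chosen
from `X` and rejected when added to `X'`. So `C (X ∪ X') = C X'`, whence `|C X| ≤ |C X'|` by the law
of aggregate demand, and `X \ C X ⊆ X' \ C X'` by substitutability. Hence `|X| ≤ |X'|`.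
-/

open Finset

variable {α : Type*} [DecidableEq α] [Fintype α]

lemma PathIndependent.substitutes {C : Finset α → Finset α} (hC : IsChoiceRule C)
    (hpi : PathIndependent C) {X Y : Finset α} (h : X ⊆ Y) {x : α} (hx : x ∈ X) (hxC : x ∈ C Y) :
    x ∈ C X := by
  have h1 := hpi X (Y \ X)
  rw [Finset.union_sdiff_of_subset h] at h1
  rw [h1] at hxC
  have h2 := hC _ hxC
  simp only [mem_union, mem_sdiff] at h2
  tauto

lemma PathIndependent.irc {C : Finset α → Finset α}
    (hpi : PathIndependent C) {X Y : Finset α} (h : X ⊆ Y) (hCY : C Y ⊆ X) : C X = C Y := by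
  have h1 := hpi Y X
  rw [Finset.union_eq_left.2 h, Finset.union_eq_right.2 hCY] at h1
  exact h1.symm

/-- `v` is compatible with `C` on `S`: it vanishes outside `S`, is injective on its positive values,
and ranks no rejected element above all of the alternatives it is rejected against. -/
def CompatibleOn (C : Finset α → Finset α) (S : Finset α) (v : α → ℕ) : Prop :=
  (∀ y, y ∉ S → v y = 0) ∧ (∀ y z, 0 < v y → v y = v z → y = z) ∧
  ∀ Y ⊆ S, ∀ y ∈ S, y ∉ C (insert y Y) → v y ≤ Y.sup v

/-- A compatible function on `S \ {e}`, with `e` chosen from `S`, extends to `S` by putting `e` on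
top. -/
lemma CompatibleOn.extend {C : Finset α → Finset α} (hC : IsChoiceRule C)
    (hpi : PathIndependent C) {S : Finset α} {e : α} (he : e ∈ C S) {v : α → ℕ}
    (hv : CompatibleOn C (S.erase e) v) :
    ∃ w : α → ℕ, CompatibleOn C S w ∧ (∀ y, y ≠ e → w y = v y) ∧
      (∀ y, y ≠ e → w y < w e) ∧ 0 < w e := by
  obtain ⟨h0, hinj, hcomp⟩ := hv
  have hle : ∀ y, v y ≤ univ.sup v := fun y => Finset.le_sup (f := v) (mem_univ y)
  have heS := hC _ he
  let w : α → ℕ := fun y => if y = e then univ.sup v + 1 else v y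
  have hwe : w e = univ.sup v + 1 := by simp [w]
  have hw : ∀ y, y ≠ e → w y = v y := fun y hy => by simp [w, hy]
  have hlt : ∀ y, y ≠ e → w y < w e := fun y hy => by
    rw [hw y hy, hwe]; have := hle y; omega
  refine ⟨w, ⟨?_, ?_, ?_⟩, hw, hlt, by omega⟩
  · intro y hy
    have hye : y ≠ e := fun h => hy (h ▸ heS)
    rw [hw y hye]
    exact h0 y (fun h => hy (mem_of_mem_erase h))
  · intro y z hpos heq
    by_cases hy : y = e <;> by_cases hz : z = e
    · rw [hy, hz]
    · have := hlt z hz; rw [hy] at heq; omega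
    · have := hlt y hy; rw [hz] at heq; omega
    · rw [hw y hy] at hpos heq
      rw [hw z hz] at heq
      exact hinj y z hpos heq
  · intro Y hY y hy hrej
    by_cases heY : e ∈ Y
    · refine le_trans ?_ (Finset.le_sup (f := w) heY)
      by_cases hye : y = e
      · rw [hye]
      · exact (hlt y hye).le
    · have hye : y ≠ e := by
        rintro rfl
        exact hrej (hpi.substitutes hC (insert_subset hy hY) (mem_insert_self _ _) he)
      have hne : ∀ z ∈ Y, z ≠ e := fun z hz h => heY (h ▸ hz)
      have hsup : Y.sup w = Y.sup v := Finset.sup_congr rfl (fun z hz => hw z (hne z hz))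
      rw [hw y hye, hsup]
      exact hcomp Y (fun z hz => mem_erase.2 ⟨hne z hz, hY hz⟩) y (mem_erase.2 ⟨hye, hy⟩) hrej

lemma exists_compatibleOn {C : Finset α → Finset α} (hC : IsChoiceRule C)
    (hpi : PathIndependent C) (S : Finset α) : ∃ v : α → ℕ, CompatibleOn C S v := by
  induction S using Finset.strongInduction with
  | H S ih =>
    by_cases hS : (C S).Nonempty
    · obtain ⟨e, he⟩ := hS
      obtain ⟨v, hv⟩ := ih _ (erase_ssubset (hC _ he))
      obtain ⟨w, hw, -⟩ := hv.extend hC hpi he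
      exact ⟨w, hw⟩
    · exact ⟨fun _ => 0, fun _ _ => rfl, fun _ _ h => absurd h (lt_irrefl _),
        fun _ _ _ _ _ => Nat.zero_le _⟩

/-- Elements chosen from `S` outside `X ∪ {x}` are ranked on top one after the other; once none is
left, `x` itself is chosen from `S` and can be put on top. -/
lemma exists_compatible_separating {C : Finset α → Finset α} (hC : IsChoiceRule C)
    (hpi : PathIndependent C) {X : Finset α} {x : α} (hx : x ∉ X) (hxC : x ∈ C (insert x X))
    (S : Finset α) (hS : insert x X ⊆ S) :
    ∃ v : α → ℕ, CompatibleOn C S v ∧ X.sup v < v x := by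
  induction S using Finset.strongInduction with
  | H S ih =>
    by_cases h : C S ⊆ insert x X
    · rw [hpi.irc hS h] at hxC
      obtain ⟨v, hv⟩ := exists_compatibleOn hC hpi (S.erase x)
      obtain ⟨w, hw, -, hlt, hpos⟩ := hv.extend hC hpi hxC
      refine ⟨w, hw, ?_⟩
      exact (Finset.sup_lt_iff hpos).2 (fun y hy => hlt y (fun h => hx (h ▸ hy)))
    · obtain ⟨e, he, hne⟩ := not_subset.1 h
      obtain ⟨v, hv, hsep⟩ := ih _ (erase_ssubset (hC _ he))
        (fun z hz => mem_erase.2 ⟨fun h => hne (h ▸ hz), hS hz⟩)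
      obtain ⟨w, hw, hwv, -⟩ := hv.extend hC hpi he
      refine ⟨w, hw, ?_⟩
      have hX : X.sup w = X.sup v := Finset.sup_congr rfl
        (fun z hz => hwv z (fun h => hne (h ▸ mem_insert_of_mem hz)))
      rw [hX, hwv x (fun h => hne (h ▸ mem_insert_self _ _))]
      exact hsep

/-- A real-valued representation of the lexicographic order on `(m 0 X, …, m (n-1) X, -|X|)`. -/
lemma exists_lex_utility {n : ℕ} (m : Fin n → Finset α → ℕ) :
    ∃ u : Finset α → ℝ,
      (∀ X Y, ∀ i, (∀ j < i, m j X ≤ m j Y) → m i X < m i Y → u X < u Y) ∧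
      (∀ X Y, (∀ i, m i X = m i Y) → Y.card < X.card → u X < u Y) := by
  classical
  let f : Finset α → Lex (Fin n → ℕ) ×ₗ ℕᵒᵈ := fun X =>
    toLex (toLex (fun i => m i X), OrderDual.toDual X.card)
  -- The number of sets strictly below `X` represents the finite total preorder induced by `f`.
  let u : Finset α → ℝ := fun X => ((univ.filter (fun Z => f Z < f X)).card : ℝ)
  have hu : ∀ X Y, f X < f Y → u X < u Y := by
    intro X Y h
    refine Nat.cast_lt.2 (Finset.card_lt_card ?_)
    refine Finset.ssubset_iff_subset_ne.2 ⟨fun Z hZ => ?_, fun heq => ?_⟩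
    · simp only [mem_filter, mem_univ, true_and] at hZ ⊢
      exact hZ.trans h
    · have : X ∈ univ.filter (fun Z => f Z < f Y) := by simpa using h
      rw [← heq] at this
      simp at this
  refine ⟨u, fun X Y i hle hlt => hu X Y ?_, fun X Y heq hcard => hu X Y ?_⟩
  · refine (Prod.Lex.toLex_lt_toLex).2 (Or.inl ?_)
    -- The first strict inequality occurs at or before `i`.
    have hex : ∃ k : Fin n, m k X < m k Y ∧ ∀ j < k, ¬ m j X < m j Y := by
      obtain ⟨k, hk, hmin⟩ := WellFounded.has_min (wellFounded_lt (α := Fin n))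
        {k | m k X < m k Y} ⟨i, hlt⟩
      exact ⟨k, hk, fun j hj hj' => hmin j hj' hj⟩
    obtain ⟨k, hk, hmin⟩ := hex
    have hki : k ≤ i := not_lt.1 (fun h => hmin i h hlt)
    exact ⟨k, fun j hj => le_antisymm (hle j (hj.trans_le hki)) (not_lt.1 (hmin j hj)), hk⟩
  · refine (Prod.Lex.toLex_lt_toLex).2 (Or.inr ⟨?_, ?_⟩)
    · exact congrArg toLex (funext heq)
    · exact OrderDual.toDual_lt_toDual.2 hcard

/-- Finitely many compatible functions separate every `X` from every `x ∉ X` chosen from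
`X ∪ {x}`. -/
lemma exists_compatible_family {C : Finset α → Finset α} (hC : IsChoiceRule C)
    (hpi : PathIndependent C) :
    ∃ (n : ℕ) (v : Fin n → α → ℕ),
      (∀ i y z, 0 < v i y → v i y = v i z → y = z) ∧
      (∀ i Y y, y ∉ C (insert y Y) → v i y ≤ Y.sup (v i)) ∧
      (∀ X x, x ∉ X → x ∈ C (insert x X) → ∃ i, X.sup (v i) < v i x) := by
  have h : ∀ p : Finset α × α, ∃ v : α → ℕ, CompatibleOn C univ v ∧
      (p.2 ∉ p.1 → p.2 ∈ C (insert p.2 p.1) → p.1.sup v < v p.2) := by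
    rintro ⟨X, x⟩
    by_cases hx : x ∉ X ∧ x ∈ C (insert x X)
    · obtain ⟨v, hv, hs⟩ := exists_compatible_separating hC hpi hx.1 hx.2 univ (subset_univ _)
      exact ⟨v, hv, fun _ _ => hs⟩
    · obtain ⟨v, hv⟩ := exists_compatibleOn hC hpi univ
      exact ⟨v, hv, fun h1 h2 => absurd ⟨h1, h2⟩ hx⟩
  choose w hw hsep using h
  let e := Fintype.equivFin (Finset α × α)
  refine ⟨_, fun i => w (e.symm i), fun i => (hw _).2.1, fun i Y y hy =>
    (hw _).2.2 Y (subset_univ _) y (mem_univ _) hy, fun X x hx hxC => ⟨e (X, x), ?_⟩⟩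
  simpa using hsep (X, x) hx hxC

theorem stmt5 (C : Finset α → Finset α) (hC : IsChoiceRule C)
    (hpi : PathIndependent C) (hlad : LawOfAggregateDemand C) :
    ∃ u : Finset α → ℝ, Rationalizes u C ∧ OrdinalConcave u ∧ SizeRestrictedConcave u := by
  obtain ⟨n, v, hinj, hcomp, hsep⟩ := exists_compatible_family hC hpi
  obtain ⟨u, hu1, hu2⟩ := exists_lex_utility (fun i X => X.sup (v i))
  have hle : ∀ (i : Fin n) {X : Finset α} {x : α}, x ∈ X → v i x ≤ X.sup (v i) :=
    fun i X x hx => Finset.le_sup (f := v i) hx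
  have hadd : ∀ X x, x ∉ X → x ∈ C (insert x X) → u X < u (insert x X) := by
    intro X x hx hxC
    obtain ⟨i, hi⟩ := hsep X x hx hxC
    exact hu1 _ _ i (fun j _ => Finset.sup_mono (subset_insert _ _))
      (hi.trans_le (hle i (mem_insert_self _ _)))
  have hdel : ∀ X x, x ∈ X → x ∉ C X → u X < u (X.erase x) := by
    intro X x hx hxC
    refine hu2 _ _ (fun i => le_antisymm (Finset.sup_le fun y hy => ?_)
      (Finset.sup_mono (erase_subset _ _))) (card_erase_lt_of_mem hx)
    by_cases hyx : y = x
    · rw [hyx]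
      exact hcomp i _ _ (by rwa [insert_erase hx])
    · exact hle i (mem_erase.2 ⟨hyx, hy⟩)
  refine ⟨u, ?_, ?_, ?_⟩
  · intro X X' hX' hne
    have hsup : ∀ i, X.sup (v i) ≤ (C X).sup (v i) := by
      refine fun i => Finset.sup_le fun y hy => ?_
      by_cases hyC : y ∈ C X
      · exact hle i hyC
      · refine hcomp i _ _ ?_
        rwa [hpi.irc (insert_subset hy (hC X)) (subset_insert _ _)]
    have hmono : ∀ i, X'.sup (v i) ≤ (C X).sup (v i) :=
      fun i => (Finset.sup_mono hX').trans (hsup i)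
    by_cases hstrict : ∃ i, X'.sup (v i) < (C X).sup (v i)
    · obtain ⟨i, hi⟩ := hstrict
      exact hu1 _ _ i (fun j _ => hmono j) hi
    · push Not at hstrict
      refine hu2 _ _ (fun i => le_antisymm (hmono i) (hstrict i)) (Finset.card_lt_card ?_)
      refine Finset.ssubset_iff_subset_ne.2 ⟨fun x hx => ?_, hne.symm⟩
      by_contra hxX'
      obtain ⟨i, hi⟩ := hsep X' x hxX' (hpi.substitutes hC
        (insert_subset (hC _ hx) hX') (mem_insert_self _ _) hx)
      exact absurd (hi.trans_le (hle i hx)) (not_lt.2 (hstrict i))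
  · intro X X' x hx
    obtain ⟨hxX, hxX'⟩ := mem_sdiff.1 hx
    by_cases h1 : x ∈ C (insert x X')
    · exact ⟨none, by simp, Or.inr (Or.inl (hadd X' x hxX' h1))⟩
    by_cases h2 : x ∉ C X
    · exact ⟨none, by simp, Or.inl (hdel X x hxX h2)⟩
    push Not at h2
    have h3 : ∃ i, (X.erase x).sup (v i) < v i x :=
      hsep _ x (notMem_erase _ _) (by rwa [insert_erase hxX])
    obtain ⟨i, hi, hmin⟩ := WellFounded.has_min (wellFounded_lt (α := Fin n))
      {i | (X.erase x).sup (v i) < v i x} h3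
    have hi : (X.erase x).sup (v i) < v i x := hi
    have hpos : 0 < v i x := (Nat.zero_le _).trans_lt hi
    obtain ⟨a, haX', ha⟩ := (Finset.le_sup_iff hpos).1 (hcomp i X' x h1)
    have hax : a ≠ x := fun h => hxX' (h ▸ haX')
    have hlt : v i x < v i a := lt_of_le_of_ne ha (fun h => hax (hinj i x a hpos h).symm)
    have haX : a ∉ X := fun h =>
      absurd (hi.trans hlt) (not_lt.2 (hle i (mem_erase.2 ⟨hax, h⟩)))
    refine ⟨some a, fun b hb => ?_, Or.inl ?_⟩
    · obtain rfl := Option.some.inj hb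
      exact mem_sdiff.2 ⟨haX', haX⟩
    · change u X < u (insert a (X.erase x))
      have hXsup : ∀ j, X.sup (v j) = max (v j x) ((X.erase x).sup (v j)) := fun j => by
        conv_lhs => rw [← insert_erase hxX, Finset.sup_insert]
      refine hu1 _ _ i (fun j hj => ?_) ?_
      · have : v j x ≤ (X.erase x).sup (v j) := not_lt.1 (fun h => hmin j h hj)
        change X.sup (v j) ≤ _
        rw [hXsup, max_eq_right this]
        exact Finset.sup_mono (subset_insert _ _)
      · -- `x` is the unique `i`-maximal element of `X`
        rw [hXsup, max_eq_left hi.le]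
        exact hlt.trans_le (hle i (mem_insert_self _ _))
  · intro X X' hcard
    by_contra hcon
    push Not at hcon
    have hch : ∀ x ∈ X, x ∉ X' → x ∈ C X := fun x hx hx' => by
      by_contra h
      exact absurd (hdel X x hx h) (not_lt.2 (hcon x (mem_sdiff.2 ⟨hx, hx'⟩)).1)
    have hrej : ∀ x ∈ X, x ∉ X' → x ∉ C (insert x X') := fun x hx hx' h =>
      absurd (hadd X' x hx' h) (not_lt.2 (hcon x (mem_sdiff.2 ⟨hx, hx'⟩)).2.1)
    have hsub : C (X ∪ X') ⊆ X' := fun z hz => by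
      by_contra hz'
      have hzX : z ∈ X := (mem_union.1 (hC _ hz)).resolve_right hz'
      exact hrej z hzX hz' (hpi.substitutes hC
        (insert_subset (mem_union_left _ hzX) subset_union_right) (mem_insert_self _ _) hz)
    have heq : C X' = C (X ∪ X') := hpi.irc subset_union_right hsub
    have hcC : (C X).card ≤ (C X').card := heq ▸ hlad _ _ subset_union_left
    have hcR : (X \ C X).card ≤ (X' \ C X').card := by
      refine Finset.card_le_card fun z hz => ?_
      obtain ⟨hzX, hzC⟩ := mem_sdiff.1 hz
      refine mem_sdiff.2 ⟨by_contra fun h => hzC (hch z hzX h), fun h => hzC ?_⟩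
      rw [heq] at h
      exact hpi.substitutes hC subset_union_left hzX h
    have e1 := Finset.card_sdiff_add_card_eq_card (hC X)
    have e2 := Finset.card_sdiff_add_card_eq_card (hC X')
    omega
end

section
/- A choice rule C on a finite set 𝒳 of contracts satisfies path independence if and only if it satisfies both the irrelevance of rejected contracts and the substitutes condition. -/
/-!
Path independence applied to `X' ∪ X` with `C X' ⊆ X ⊆ X'` gives irrelevance of rejected
contracts, and applied to `X' = X ∪ (X' \ X)` it gives `C X' ⊆ C X ∪ (X' \ X)`, which is the
substitutes condition. Conversely, substitutes gives `C (X ∪ X') ⊆ C X ∪ X' ⊆ X ∪ X'`, and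
irrelevance of rejected contracts then identifies the choices from the last two sets.
-/

open Finset

variable {α : Type*} [DecidableEq α] [Fintype α]

theorem stmt6 (C : Finset α → Finset α) (hC : IsChoiceRule C) :
    PathIndependent C ↔
      (IrrelevanceOfRejectedContracts C ∧ Substitutes C) := by
  constructor
  · intro h
    refine ⟨fun X X' hX hCX => ?_, fun X X' hX a ha => ?_⟩
    · have h1 := h X' X
      rw [union_eq_left.mpr hX, union_eq_right.mpr hCX] at h1
      exact h1.symm
    · -- Splitting `X'` as `X ∪ (X' \ X)` shows `C X' ⊆ C X ∪ (X' \ X)`.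
      have h1 := h X (X' \ X)
      rw [union_sdiff_of_subset hX] at h1
      rw [mem_inter, h1] at ha
      have h2 := hC _ ha.1
      rw [mem_union, mem_sdiff] at h2
      exact h2.resolve_right fun h3 => h3.2 ha.2
  · rintro ⟨hI, hS⟩ X X'
    -- By substitutes, `C (X ∪ X') ⊆ C X ∪ X'`, so irrelevance of rejected contracts applies.
    refine (hI _ _ (union_subset_union_left (hC X)) fun a ha => ?_).symm
    rcases mem_union.mp (hC _ ha) with hX | hX'
    · exact mem_union_left _ (hS X (X ∪ X') subset_union_left (mem_inter.mpr ⟨ha, hX⟩))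
    · exact mem_union_right _ hX'
end

section
/- If a utility function u : 2^𝒳 → ℝ on a finite set 𝒳 satisfies M♮-concavity, then u satisfies size-restricted concavity. -/
/-!
The proof establishes the stronger exchange inequality: if `|Y| < |X|`, then some `x ∈ X \ Y` has
`u X + u Y ≤ u (X - x) + u (Y + x)`.

Suppose it fails for every `x ∈ X \ Y`. Adding a modular function `Z ↦ ∑ i ∈ Z, q i` preserves
M♮-concavity (`mNatConcave_add_sum`). Take `q x = u (X - x) - u X` off `Y`, and `q` equal to a huge
constant on `Y`, and let `v` be the perturbed utility. Then `v (X - x) ≤ v X` for `x ∈ X`, so `X`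
maximizes `v` over subsets of `X`; and `v (Y + x) < v Y` for `x ∈ X \ Y`, so `Y` is the only
maximizer of `v` over subsets of `X ∪ Y`. This contradicts the law of aggregate demand
(`exists_maximizer_card_le`): when the set of available elements grows, some new maximizer is at
least as large as the given old one.
-/

open Finset

variable {α : Type*} [DecidableEq α] [Fintype α]

set_option linter.unusedSectionVars false

/-- `W` maximizes `v` among the subsets of `A`. -/
def IsMaximizerOn (v : Finset α → ℝ) (A W : Finset α) : Prop :=
  W ⊆ A ∧ ∀ Z ⊆ A, v Z ≤ v W

lemma exists_isMaximizerOn (v : Finset α → ℝ) (A : Finset α) : ∃ W, IsMaximizerOn v A W := by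
  obtain ⟨W, hW, h⟩ := Finset.exists_max_image A.powerset v ⟨∅, by simp⟩
  exact ⟨W, by simpa using hW, fun Z hZ => h Z (by simpa using hZ)⟩

/-- The exchange operations move elements between the two sets, so modular terms cancel. -/
lemma mNatConcave_add_sum {u : Finset α → ℝ} (hm : MNatConcave u) (q : α → ℝ) :
    MNatConcave (fun Z => u Z + ∑ i ∈ Z, q i) := by
  intro X Y x hx
  obtain ⟨y, hy, h⟩ := hm X Y x hx
  refine ⟨y, hy, ?_⟩
  rw [mem_sdiff] at hx
  have h1 := Finset.sum_erase_add X q hx.1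
  have h2 := Finset.sum_insert (f := q) hx.2
  cases y with
  | none =>
    simp only [swapIn, swapOut, Option.elim] at h ⊢
    linarith
  | some a =>
    have ha := mem_sdiff.1 (hy a rfl)
    simp only [swapIn, swapOut, Option.elim] at h ⊢
    have h3 : ∑ i ∈ insert a (X.erase x), q i = q a + ∑ i ∈ X.erase x, q i :=
      Finset.sum_insert (fun hh => ha.2 (mem_of_mem_erase hh))
    have h4 := Finset.sum_erase_add (insert x Y) q (mem_insert_of_mem ha.1)
    linarith

/-- M♮-concavity for nested sets is submodularity: no element can be exchanged back. -/
lemma add_le_of_subset {v : Finset α → ℝ} (hm : MNatConcave v) {Y X : Finset α} (hYX : Y ⊆ X)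
    {x : α} (hx : x ∈ X) (hxY : x ∉ Y) : v X + v Y ≤ v (X.erase x) + v (insert x Y) := by
  obtain ⟨y, hy, h⟩ := hm X Y x (mem_sdiff.2 ⟨hx, hxY⟩)
  cases y with
  | none => exact h
  | some a =>
    have ha := mem_sdiff.1 (hy a rfl)
    exact absurd (hYX ha.1) ha.2

/-- The law of aggregate demand when a single element `j` becomes available. -/
lemma exists_maximizer_insert {v : Finset α → ℝ} (hm : MNatConcave v) {A X : Finset α} (j : α)
    (hX : IsMaximizerOn v A X) : ∃ W, IsMaximizerOn v (insert j A) W ∧ X.card ≤ W.card := by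
  classical
  -- Take a maximizer on `A + j` as close to `X` as possible.
  have hex : ∃ n W, IsMaximizerOn v (insert j A) W ∧ (X \ W).card = n := by
    obtain ⟨W, hW⟩ := exists_isMaximizerOn v (insert j A)
    exact ⟨_, W, hW, rfl⟩
  obtain ⟨W, hW, hn⟩ := Nat.find_spec hex
  have hmin : ∀ W', IsMaximizerOn v (insert j A) W' → (X \ W).card ≤ (X \ W').card := by
    intro W' hW'
    rw [hn]
    exact Nat.find_min' hex ⟨W', hW', rfl⟩
  by_cases hXW : X ⊆ W
  · exact ⟨W, hW, card_le_card hXW⟩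
  obtain ⟨x, hxX, hxW⟩ := not_subset.1 hXW
  obtain ⟨y, hy, h⟩ := hm X W x (mem_sdiff.2 ⟨hxX, hxW⟩)
  obtain ⟨hXA, hXm⟩ := hX
  obtain ⟨hWA, hWm⟩ := hW
  -- A maximizer containing `X ∩ W` and `x` would be closer to `X` than `W`.
  have hcloser : ∀ W', IsMaximizerOn v (insert j A) W' → X ∩ insert x W ⊆ W' → False := by
    intro W' hW' hs
    have h1 := hmin W' hW'
    have h2 : X \ W' ⊂ X \ W := by
      refine (ssubset_iff_of_subset fun z hz => ?_).2 ⟨x, ?_, ?_⟩ <;> grind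
    exact absurd (card_lt_card h2) (by omega)
  cases y with
  | none =>
    simp only [swapIn, swapOut, Option.elim] at h
    have h1 := hXm (X.erase x) ((erase_subset _ _).trans hXA)
    refine (hcloser (insert x W) ⟨by grind, fun Z hZ => ?_⟩ (by grind)).elim
    linarith [hWm Z hZ]
  | some a =>
    have ha := mem_sdiff.1 (hy a rfl)
    simp only [swapIn, swapOut, Option.elim] at h
    by_cases haj : a = j
    · -- Here `W + x - j ⊆ A` is no better than `X`, so `X - x + j` is a maximizer on `A + j`.
      subst haj
      have h1 := hXm ((insert x W).erase a) (by grind)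
      refine ⟨insert a (X.erase x), ⟨by grind, fun Z hZ => ?_⟩, ?_⟩
      · linarith [hWm Z hZ]
      · rw [card_insert_of_notMem (by grind), card_erase_add_one hxX]
    · -- Here `X - x + a ⊆ A` is no better than `X`, so `W + x - a` is a closer maximizer.
      have h1 := hXm (insert a (X.erase x)) (by grind)
      refine (hcloser ((insert x W).erase a) ⟨by grind, fun Z hZ => ?_⟩ (by grind)).elim
      linarith [hWm Z hZ]

/-- The law of aggregate demand, for maximizers that need not be unique. -/
lemma exists_maximizer_card_le {v : Finset α → ℝ} (hm : MNatConcave v) {A X : Finset α}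
    (hX : IsMaximizerOn v A X) (T : Finset α) :
    ∃ W, IsMaximizerOn v (T ∪ A) W ∧ X.card ≤ W.card := by
  induction T using Finset.induction_on with
  | empty => exact ⟨X, by simpa using hX, le_rfl⟩
  | insert j T _ ih =>
    obtain ⟨W, hW, hc⟩ := ih
    obtain ⟨W', hW', hc'⟩ := exists_maximizer_insert hm j hW
    exact ⟨W', by rwa [insert_union], hc.trans hc'⟩

/-- For an M♮-concave function, local optimality of `X` under deletions is global optimality
among the subsets of `X`. -/
lemma isMaximizerOn_self {v : Finset α → ℝ} (hm : MNatConcave v) {X : Finset α}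
    (h : ∀ x ∈ X, v (X.erase x) ≤ v X) : IsMaximizerOn v X X := by
  refine ⟨Subset.rfl, fun Z hZ => ?_⟩
  induction hn : (X \ Z).card generalizing Z with
  | zero =>
    have : X ⊆ Z := sdiff_eq_empty_iff_subset.1 (card_eq_zero.1 hn)
    rw [hZ.antisymm this]
  | succ n ih =>
    obtain ⟨x, hx⟩ := card_pos.1 (by omega : 0 < (X \ Z).card)
    obtain ⟨hxX, hxZ⟩ := mem_sdiff.1 hx
    have h1 := add_le_of_subset hm hZ hxX hxZ
    have h2 := ih (insert x Z) (insert_subset hxX hZ) (by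
      rw [sdiff_insert, card_erase_of_mem hx, hn]; rfl)
    linarith [h x hxX]

lemma exists_exchange {u : Finset α → ℝ} (hm : MNatConcave u) {X Y : Finset α}
    (hc : Y.card < X.card) :
    ∃ x ∈ X \ Y, u X + u Y ≤ u (X.erase x) + u (insert x Y) := by
  by_contra! hcon
  -- `M` exceeds every difference of two values of `u`.
  obtain ⟨M, hM⟩ : ∃ M : ℝ, ∀ Z Z' : Finset α, u Z - u Z' < M := by
    obtain ⟨a, -, ha⟩ := Finset.exists_max_image univ u ⟨∅, mem_univ _⟩
    obtain ⟨b, -, hb⟩ := Finset.exists_min_image univ u ⟨∅, mem_univ _⟩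
    refine ⟨u a - u b + 1, fun Z Z' => ?_⟩
    linarith [ha Z (mem_univ _), hb Z' (mem_univ _)]
  obtain ⟨q, hqY, hqX⟩ : ∃ q : α → ℝ, (∀ i ∈ Y, q i = M) ∧
      ∀ i ∉ Y, q i = u (X.erase i) - u X :=
    ⟨fun i => if i ∈ Y then M else u (X.erase i) - u X, fun i hi => if_pos hi,
      fun i hi => if_neg hi⟩
  obtain ⟨v, hv⟩ : ∃ v : Finset α → ℝ, v = fun Z => u Z + ∑ i ∈ Z, q i := ⟨_, rfl⟩
  have hmv : MNatConcave v := hv ▸ mNatConcave_add_sum hm q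
  have hins : ∀ (Z : Finset α) (i : α), i ∉ Z → v (insert i Z) - v Z =
      u (insert i Z) - u Z + q i := by
    intro Z i hi
    simp only [hv, sum_insert hi]
    ring
  have hXmax : IsMaximizerOn v X X := by
    refine isMaximizerOn_self hmv fun x hx => ?_
    have h1 := hins (X.erase x) x (notMem_erase x X)
    rw [insert_erase hx] at h1
    by_cases hxY : x ∈ Y
    · linarith [hqY x hxY, hM (X.erase x) X]
    · linarith [hqX x hxY]
  obtain ⟨W, ⟨hWs, hWm⟩, hWc⟩ := exists_maximizer_card_le hmv hXmax Y
  -- Each element of `Y` is worth more than any change in `u`, so a maximizer contains all of `Y`.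
  have hYW : Y ⊆ W := by
    intro j hj
    by_contra hjW
    have h1 := hins W j hjW
    have h2 := hWm (insert j W) (insert_subset (mem_union_left _ hj) hWs)
    linarith [hqY j hj, hM W (insert j W)]
  obtain ⟨x, hxW, hxY⟩ := exists_mem_notMem_of_card_lt_card (hc.trans_le hWc)
  have hxX : x ∈ X := (mem_union.1 (hWs hxW)).resolve_left hxY
  have h1 := add_le_of_subset hmv hYW hxW hxY
  have h2 := hWm (W.erase x) ((erase_subset _ _).trans hWs)
  linarith [hins Y x hxY, hqX x hxY, hcon x (mem_sdiff.2 ⟨hxX, hxY⟩)]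

theorem stmt9 (u : Finset α → ℝ) (hm : MNatConcave u) :
    SizeRestrictedConcave u := by
  intro X Y hc
  obtain ⟨x, hx, h⟩ := exists_exchange hm hc
  refine ⟨x, hx, ?_⟩
  by_contra! hcon
  obtain ⟨h1, h2, h3⟩ := hcon
  exact h3 (by linarith) (by linarith)
end

section
/- Let C be a choice rule on a finite set 𝒳 of contracts with n = |𝒳| that satisfies the substitutes condition. For each X ⊆ 𝒳 define E_X^1 = 𝒳 and E_X^k = E_X^{k−1} \ (C(E_X^{k−1}) \ X) for k = 2, …, n. Then for all X, X' ⊆ 𝒳 with X ⊆ X' and all j = 1, …, n, E_X^j ⊆ E_{X'}^j. -/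
open Finset

variable {α : Type*} [DecidableEq α] [Fintype α]

/-- `Eseq C X k` is the set `E_X^{k+1}` of the paper: `E_X^1 = 𝒳` and
`E_X^k = E_X^{k-1} \ (C(E_X^{k-1}) \ X)`. -/
def Eseq (C : Finset α → Finset α) (X : Finset α) : ℕ → Finset α
  | 0 => Finset.univ
  | k + 1 => Eseq C X k \ (C (Eseq C X k) \ X)

theorem stmt10 (C : Finset α → Finset α) (hC : IsChoiceRule C)
    (hsub : Substitutes C) :
    ∀ X X' : Finset α, X ⊆ X' → ∀ j : ℕ, Eseq C X j ⊆ Eseq C X' j := by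
  intro X X' hX j
  induction j with
  | zero => exact Finset.Subset.refl _
  | succ k ih =>
    intro a ha
    simp only [Eseq, mem_sdiff, not_and, not_not] at ha ⊢
    -- If `a` is chosen from the larger set, substitutes makes it chosen from the smaller
    -- one; as it survived there, it lies in `X`, hence in `X'`.
    exact ⟨ih ha.1, fun h => hX (ha.2 (hsub _ _ ih (mem_inter.2 ⟨h, ha.1⟩)))⟩
end

section
/- If a choice rule C on a finite set 𝒳 of contracts satisfies path independence, then for every X ⊆ 𝒳, C(X) ∩ C(𝒳) = X ∩ C(𝒳); consequently, the function v defined by v(X) = |X ∩ C(𝒳)| satisfies v(C(X)) ≥ v(X') for every X' ⊆ X. -/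
open Finset

variable {α : Type*} [DecidableEq α] [Fintype α]

theorem stmt12 (C : Finset α → Finset α) (hC : IsChoiceRule C)
    (hpi : PathIndependent C) :
    (∀ X : Finset α, C X ∩ C Finset.univ = X ∩ C Finset.univ) ∧
      (∀ X X' : Finset α, X' ⊆ X →
        (X' ∩ C Finset.univ).card ≤ (C X ∩ C Finset.univ).card) := by
  have key : ∀ X : Finset α, C X ∩ C Finset.univ = X ∩ C Finset.univ := by
    intro X
    -- Path independence applied to `univ = X ∪ Xᶜ`: a chosen contract in `X` must lie in `C X`.
    have hsub : C Finset.univ ⊆ C X ∪ Xᶜ := by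
      rw [← Finset.union_compl X, hpi X Xᶜ]
      exact hC _
    ext x
    simp only [Finset.mem_inter]
    refine ⟨fun h => ⟨hC X h.1, h.2⟩, fun h => ⟨?_, h.2⟩⟩
    rcases Finset.mem_union.mp (hsub h.2) with hx | hx
    · exact hx
    · exact absurd h.1 (Finset.mem_compl.mp hx)
  refine ⟨key, fun X X' h => ?_⟩
  rw [key X]
  exact Finset.card_le_card (Finset.inter_subset_inter_right h)
end

section
/- Let 𝒳 = {x, y, z} be a three-element set of contracts and define the choice rule C by C(X) = {x} if x ∈ X and C(X) = X otherwise. Then C satisfies path independence but does not satisfy the law of aggregate demand. -/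
open Finset

variable {α : Type*} [DecidableEq α] [Fintype α]

theorem stmt18 (x y z : α) (hxy : x ≠ y) (hxz : x ≠ z) (hyz : y ≠ z)
    (huniv : (Finset.univ : Finset α) = {x, y, z})
    (C : Finset α → Finset α)
    (hCdef : ∀ X : Finset α, C X = if x ∈ X then {x} else X) :
    PathIndependent C ∧ ¬ LawOfAggregateDemand C := by
  constructor
  · intro X X'
    by_cases h : x ∈ X <;> by_cases h' : x ∈ X' <;> simp [hCdef, h, h']
  · intro h
    -- Adding `x` to `{y, z}` shrinks the chosen set from two contracts to one.
    have h1 := h {x, y, z} {y, z} (by simp)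
    rw [hCdef, hCdef, if_neg (by simp [hxy, hxz]), if_pos (by simp),
      Finset.card_pair hyz, Finset.card_singleton] at h1
    omega
end
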